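/- arXiv:1606.01091 — 2 statements merged into one kernel-verified Lean document; each statement's English description precedes it below -/
import Mathlib

section
/- Let (G(L),s,t,c) be a temporal flow network with unbounded node buffers and let f be a temporal flow in it. If the value v(f) of f is strictly positive, then there exists at least one s→t journey in G(L). Equivalently, if S is a temporal cut separating s and t and all time-edges of S are removed from the network, then every temporal flow in the resulting network has value 0. -/
open Finset

/-- A temporal flow network on a finite vertex set: a labelling `L` assigning to every
ordered pair of vertices (an edge exists iff its label set is nonempty) a finite set of
positive integer availability times, a source `s` with no incoming time-edges, a sink `t`
with no outgoing time-edges, and a positive capacity on every edge. Node buffers are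
unbounded. -/
structure TempFlowNet (V : Type*) [Fintype V] [DecidableEq V] where
  L : V → V → Finset ℕ
  s : V
  t : V
  c : V → V → ℝ
  c_pos : ∀ u v, (L u v).Nonempty → 0 < c u v
  labels_pos : ∀ u v, ∀ l ∈ L u v, 0 < l
  no_into_source : ∀ u, L u s = ∅
  no_out_of_sink : ∀ u, L t u = ∅

variable {V : Type*} [Fintype V] [DecidableEq V]

/-- A temporal flow: a nonnegative amount on each time-edge, at most the capacity,
vanishing outside the available labels, and such that at every vertex other than the
source and the sink, the total flow sent out on time-edges with label `≤ l` never exceeds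
the total flow received on time-edges with label `< l`. -/
structure IsTempFlow (N : TempFlowNet V) (f : V → V → ℕ → ℝ) : Prop where
  nonneg : ∀ u v l, 0 ≤ f u v l
  le_cap : ∀ u v l, f u v l ≤ N.c u v
  supported : ∀ u v l, l ∉ N.L u v → f u v l = 0
  conservation : ∀ v, v ≠ N.s → v ≠ N.t → ∀ l : ℕ,
    ∑ w, ∑ l' ∈ (N.L v w).filter (fun x => x ≤ l), f v w l' ≤
      ∑ w, ∑ l' ∈ (N.L w v).filter (fun x => x < l), f w v l'

/-- The value of a temporal flow: the total flow arriving at the sink. -/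
def flowValue (N : TempFlowNet V) (f : V → V → ℕ → ℝ) : ℝ :=
  ∑ w, ∑ l ∈ N.L w N.t, f w N.t l

/-- There is a journey from `u` to `v`: a sequence of time-edges, consecutive in the graph,
each available at its label, with strictly increasing labels. -/
def HasJourney (N : TempFlowNet V) (u v : V) : Prop :=
  ∃ (k : ℕ) (p : Fin (k + 2) → V) (ℓ : Fin (k + 1) → ℕ),
    p 0 = u ∧ p (Fin.last (k + 1)) = v ∧
    (∀ i : Fin (k + 1), ℓ i ∈ N.L (p i.castSucc) (p i.succ)) ∧
    StrictMono ℓ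

/-- There is a journey from `u` to `v` using no time-edge of `S`. -/
def HasJourneyAvoiding (N : TempFlowNet V) (S : Set (V × V × ℕ)) (u v : V) : Prop :=
  ∃ (k : ℕ) (p : Fin (k + 2) → V) (ℓ : Fin (k + 1) → ℕ),
    p 0 = u ∧ p (Fin.last (k + 1)) = v ∧
    (∀ i : Fin (k + 1), ℓ i ∈ N.L (p i.castSucc) (p i.succ)) ∧
    StrictMono ℓ ∧
    ∀ i : Fin (k + 1), (p i.castSucc, p i.succ, ℓ i) ∉ S

/-- A temporal cut separating `s` and `t`: a set of time-edges of the network whose removal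
leaves no `s → t` journey. -/
def IsTemporalCut (N : TempFlowNet V) (S : Set (V × V × ℕ)) : Prop :=
  (∀ e ∈ S, e.2.2 ∈ N.L e.1 e.2.1) ∧ ¬ HasJourneyAvoiding N S N.s N.t

lemma exists_pos_of_sum_pos {ι : Type*} {A : Finset ι} {g : ι → ℝ} (h : 0 < ∑ i ∈ A, g i) :
    ∃ i ∈ A, 0 < g i := by
  contrapose! h
  exact Finset.sum_nonpos h

/-- A positive amount of flow on a time-edge is the last step of a journey from the source
all of whose time-edges carry positive flow. -/
lemma IsTempFlow.exists_positive_journey {N : TempFlowNet V} {f : V → V → ℕ → ℝ}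
    (hf : IsTempFlow N f) (l : ℕ) : ∀ u v : V, 0 < f u v l →
    ∃ (k : ℕ) (p : Fin (k + 2) → V) (ℓ : Fin (k + 1) → ℕ),
      p 0 = N.s ∧ p (Fin.last (k + 1)) = v ∧ ℓ (Fin.last k) = l ∧ StrictMono ℓ ∧
      ∀ i : Fin (k + 1), 0 < f (p i.castSucc) (p i.succ) (ℓ i) := by
  induction l using Nat.strong_induction_on with
  | _ l ih =>
    intro u v huv
    have hl : l ∈ N.L u v := by
      by_contra h
      exact huv.ne' (hf.supported u v l h)
    by_cases hs : u = N.s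
    · refine ⟨0, ![u, v], ![l], by simpa using hs, rfl, rfl, ?_, ?_⟩
      · exact fun i j hij => absurd hij (by omega)
      · intro i
        fin_cases i
        simpa using huv
    have ht : u ≠ N.t := by
      rintro rfl
      simp [N.no_out_of_sink] at hl
    have hout : f u v l ≤ ∑ w, ∑ l' ∈ (N.L u w).filter (fun x => x ≤ l), f u w l' :=
      (Finset.single_le_sum (f := fun l' => f u v l') (fun l' _ => hf.nonneg u v l')
        (Finset.mem_filter.2 ⟨hl, le_refl l⟩ : l ∈ (N.L u v).filter (fun x => x ≤ l))).trans
      (Finset.single_le_sum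
        (f := fun w => ∑ l' ∈ (N.L u w).filter (fun x => x ≤ l), f u w l')
        (fun w _ => Finset.sum_nonneg fun l' _ => hf.nonneg u w l') (Finset.mem_univ v))
    have hin := (huv.trans_le hout).trans_le (hf.conservation u hs ht l)
    obtain ⟨w, -, hw⟩ := exists_pos_of_sum_pos hin
    obtain ⟨m, hm, hwm⟩ := exists_pos_of_sum_pos hw
    have hml : m < l := (Finset.mem_filter.1 hm).2
    obtain ⟨k, p, ℓ, h0, hlast, hℓ, hmono, hpos⟩ := ih m hml w u hwm
    refine ⟨k + 1, Fin.snoc (α := fun _ => V) p v, Fin.snoc (α := fun _ => ℕ) ℓ l,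
      ?_, Fin.snoc_last .., Fin.snoc_last .., ?_, ?_⟩
    · rw [← Fin.castSucc_zero, Fin.snoc_castSucc, h0]
    · rw [Fin.strictMono_iff_lt_succ]
      intro i
      induction i using Fin.lastCases with
      | last => rw [Fin.snoc_castSucc, Fin.succ_last, Fin.snoc_last, hℓ]; exact hml
      | cast i =>
        rw [Fin.snoc_castSucc, Fin.succ_castSucc, Fin.snoc_castSucc]
        exact hmono Fin.castSucc_lt_succ
    · intro i
      induction i using Fin.lastCases with
      | last =>
        rw [Fin.snoc_castSucc, Fin.succ_last, Fin.snoc_last, Fin.snoc_last, hlast]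
        exact huv
      | cast i =>
        rw [Fin.snoc_castSucc, Fin.succ_castSucc, Fin.snoc_castSucc, Fin.snoc_castSucc]
        exact hpos i

/-- A flow of positive value that vanishes on `S` forces a source-to-sink journey avoiding
`S`. -/
lemma IsTempFlow.hasJourneyAvoiding {N : TempFlowNet V} {f : V → V → ℕ → ℝ}
    (hf : IsTempFlow N f) (hval : 0 < flowValue N f) {S : Set (V × V × ℕ)}
    (hS : ∀ u v l, (u, v, l) ∈ S → f u v l = 0) : HasJourneyAvoiding N S N.s N.t := by
  obtain ⟨w, -, hw⟩ := exists_pos_of_sum_pos hval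
  obtain ⟨l, -, hwl⟩ := exists_pos_of_sum_pos hw
  obtain ⟨k, p, ℓ, h0, hlast, -, hmono, hpos⟩ := hf.exists_positive_journey l w N.t hwl
  refine ⟨k, p, ℓ, h0, hlast, fun i => ?_, hmono, fun i hi => (hpos i).ne' (hS _ _ _ hi)⟩
  by_contra h
  exact (hpos i).ne' (hf.supported _ _ _ h)

/-- If a temporal flow has strictly positive value, then the network has an `s → t`
journey.  Equivalently, if `S` is a temporal cut separating `s` and `t`, then every
temporal flow in the network obtained by removing the time-edges of `S` (i.e. every
temporal flow sending zero flow on all time-edges of `S`) has value `0`. -/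
theorem positive_flow_needs_journey (N : TempFlowNet V) :
    (∀ f : V → V → ℕ → ℝ, IsTempFlow N f → 0 < flowValue N f → HasJourney N N.s N.t) ∧
    (∀ S : Set (V × V × ℕ), IsTemporalCut N S →
      ∀ f : V → V → ℕ → ℝ, IsTempFlow N f →
        (∀ u v l, (u, v, l) ∈ S → f u v l = 0) → flowValue N f = 0) := by
  refine ⟨fun f hf hval => ?_, fun S hS f hf hfS => ?_⟩
  · obtain ⟨k, p, ℓ, h0, hlast, hmem, hmono, -⟩ :=
      hf.hasJourneyAvoiding hval (S := ∅) (fun _ _ _ h => h.elim)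
    exact ⟨k, p, ℓ, h0, hlast, hmem, hmono⟩
  · by_contra hne
    have hnonneg : 0 ≤ flowValue N f :=
      Finset.sum_nonneg fun w _ => Finset.sum_nonneg fun l _ => hf.nonneg w N.t l
    exact hS.2 (hf.hasJourneyAvoiding (lt_of_le_of_ne hnonneg (Ne.symm hne)) hfS)
end

section
/- Let G be a directed graph with source s and sink t, let C₁ and C₂ be s–t cuts (sets of edges meeting every directed s→t path) with C₁ preceding C₂ (every directed s→t path that goes through an edge of C₁ must later go through an edge of C₂), and assign labels to the edges of G. If every label assigned to an edge of C₁ is at least α/2 and every label assigned to an edge of C₂ is at most α/2, then G contains no s→t journey. -/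
/-- A directed path with `k` edges from `s` to `t` in the digraph `G`, given by its
sequence of vertices. -/
def IsPath {V : Type*} (G : V → V → Prop) (s t : V) {k : ℕ} (p : Fin (k + 1) → V) : Prop :=
  p 0 = s ∧ p (Fin.last k) = t ∧ ∀ i : Fin k, G (p i.castSucc) (p i.succ)

/-- `C` is an `s`–`t` cut: every directed `s → t` path goes through an edge of `C`. -/
def IsCut {V : Type*} (G : V → V → Prop) (s t : V) (C : Set (V × V)) : Prop :=
  ∀ (k : ℕ) (p : Fin (k + 1) → V), IsPath G s t p →
    ∃ i : Fin k, (p i.castSucc, p i.succ) ∈ C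

/-- `C₁` precedes `C₂`: any directed `s → t` path that goes through an edge of `C₁` must
later go through an edge of `C₂`. -/
def Precedes {V : Type*} (G : V → V → Prop) (s t : V) (C₁ C₂ : Set (V × V)) : Prop :=
  ∀ (k : ℕ) (p : Fin (k + 1) → V), IsPath G s t p →
    ∀ i : Fin k, (p i.castSucc, p i.succ) ∈ C₁ →
      ∃ j : Fin k, i < j ∧ (p j.castSucc, p j.succ) ∈ C₂

/-- Let `C₁` and `C₂` be `s`–`t` cuts with `C₁` preceding `C₂`, and label the edges of `G`.
If every edge of `C₁` has label at least `α/2` and every edge of `C₂` has label at most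
`α/2`, then `G` contains no `s → t` journey, i.e. no directed `s → t` path with strictly
increasing labels along its edges. -/
theorem no_journey_of_preceding_cuts {V : Type*} (G : V → V → Prop) (s t : V)
    (lab : V → V → ℕ) (α : ℕ) (hα : Even α) (hαpos : 0 < α)
    (C₁ C₂ : Set (V × V))
    (hC₁ : IsCut G s t C₁) (hC₂ : IsCut G s t C₂)
    (hprec : Precedes G s t C₁ C₂)
    (h₁ : ∀ e ∈ C₁, α / 2 ≤ lab e.1 e.2)
    (h₂ : ∀ e ∈ C₂, lab e.1 e.2 ≤ α / 2) :
    ¬ ∃ (k : ℕ) (p : Fin (k + 1) → V), IsPath G s t p ∧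
        StrictMono fun i : Fin k => lab (p i.castSucc) (p i.succ) := by
  rintro ⟨k, p, hp, hmono⟩
  obtain ⟨i, hi⟩ := hC₁ k p hp
  obtain ⟨j, hij, hj⟩ := hprec k p hp i hi
  exact absurd (hmono hij) (not_lt.mpr ((h₂ _ hj).trans (h₁ _ hi)))
end
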